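/- arXiv:2106.00395 — 2 statements merged into one kernel-verified Lean document; each statement's English description precedes it below -/
import Mathlib

section
/- Let n ≥ 3 and V ≥ 3 be odd integers with (n, V) ≠ (5, 3). Then the class number of the imaginary quadratic field ℚ(√(1 − V^n)) is divisible by n. -/
/-- The quadratic field `ℚ(√d)`, realized as the subfield of `ℂ` generated over `ℚ`
by a complex square root of `d`. -/
noncomputable def Qsqrt (d : ℤ) : IntermediateField ℚ ℂ :=
  IntermediateField.adjoin ℚ {((d : ℂ) ^ ((1 : ℂ) / 2))}

/-- The class number of `ℚ(√d)`: the order of the ideal class group of its ring of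
integers. -/
noncomputable def classNumSqrt (d : ℤ) : ℕ :=
  Nat.card (ClassGroup (NumberField.RingOfIntegers (Qsqrt d)))


def UW (x : ℤ) : ℕ → ℤ × ℤ
  | 0 => (1, 1)
  | i + 1 => ((2*x-1) * (UW x i).1 + 2*(x-1)*(UW x i).2, (2*x-1) * (UW x i).2 + 2*x*(UW x i).1)

def CS (x : ℤ) : ℕ → ℤ × ℤ
  | 0 => (1, 0)
  | i + 1 => ((2*x-1) * (CS x i).1 + 2*x*(x-1)*(CS x i).2, (2*x-1) * (CS x i).2 + 2*(CS x i).1)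

lemma UW_pell (x : ℤ) (i : ℕ) : x * (UW x i).1^2 - (x-1) * (UW x i).2^2 = 1 := by
  induction i with
  | zero => simp [UW]
  | succ i ih => simp only [UW]; linear_combination ih

lemma UW_add (x : ℤ) (i m : ℕ) :
    (UW x (i+m)).1 = (CS x m).1 * (UW x i).1 + (x-1) * (CS x m).2 * (UW x i).2 ∧
    (UW x (i+m)).2 = (CS x m).1 * (UW x i).2 + x * (CS x m).2 * (UW x i).1 := by
  induction m with
  | zero => simp [CS]
  | succ m ih =>
    obtain ⟨h1, h2⟩ := ih
    rw [← add_assoc]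
    simp only [UW, CS, h1, h2]
    constructor <;> ring

lemma CS_odd (x : ℤ) (i : ℕ) :
    (CS x (2*i+1)).1 = x * (UW x i).1^2 + (x-1) * (UW x i).2^2 ∧
    (CS x (2*i+1)).2 = 2 * (UW x i).1 * (UW x i).2 := by
  induction i with
  | zero => simp [CS, UW]; ring
  | succ i ih =>
    obtain ⟨h1, h2⟩ := ih
    have : 2 * (i+1) + 1 = (2*i+1)+1+1 := by ring
    rw [this]
    simp only [UW, CS] at h1 h2 ⊢
    rw [h1, h2]
    constructor <;> ring

lemma UW_dvd (x : ℤ) (i t : ℕ) : (UW x i).1 ∣ (UW x (i + (2*i+1)*t)).1 := by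
  induction t with
  | zero => simp
  | succ t ih =>
    have : i + (2*i+1)*(t+1) = (i + (2*i+1)*t) + (2*i+1) := by ring
    rw [this, (UW_add _ _ _).1, (CS_odd x i).2]
    refine dvd_add (Dvd.dvd.mul_left ih _) ?_
    exact ⟨2 * (x-1) * (UW x i).2 * (UW x (i + (2*i+1)*t)).2, by ring⟩

lemma UW_pos (x : ℤ) (hx : 3 ≤ x) (i : ℕ) : 4 * (i:ℤ) + 1 ≤ (UW x i).1 ∧ 1 ≤ (UW x i).2 := by
  induction i with
  | zero => simp [UW]
  | succ i ih =>
    obtain ⟨h1, h2⟩ := ih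
    simp only [UW]
    push_cast
    constructor <;> nlinarith

lemma UW_mod (x : ℤ) (i : ℕ) :
    (∃ c, (UW x i).1 = (-1)^i * (2*i+1) + x * c) ∧ (∃ c, (UW x i).2 = (-1)^i + x * c) := by
  induction i with
  | zero => exact ⟨⟨0, by simp [UW]⟩, ⟨0, by simp [UW]⟩⟩
  | succ i ih =>
    obtain ⟨⟨c, hc⟩, ⟨d, hd⟩⟩ := ih
    simp only [UW, hc, hd]
    push_cast
    refine ⟨⟨2 * ((-1)^i * (2*i+1) + x * c) - c + 2 * ((-1)^i + x * d) - 2 * d, by ring⟩,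
      ⟨2 * ((-1)^i + x * d) - d + 2 * ((-1)^i * (2*i+1) + x * c), by ring⟩⟩

lemma UW_mod2 (x : ℤ) (i : ℕ) :
    (∃ c, 3 * (UW x i).1 = (-1)^i * (2*i+1) * (3 - 2 * x * i * (i+1)) + x^2 * c) ∧
    (∃ c, (UW x i).2 = (-1)^i * (1 - 2 * x * i * (i+1)) + x^2 * c) := by
  induction i with
  | zero => exact ⟨⟨0, by simp [UW]⟩, ⟨0, by simp [UW]⟩⟩
  | succ i ih =>
    obtain ⟨⟨c, hc⟩, ⟨d, hd⟩⟩ := ih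
    simp only [UW, mul_add]
    have e1 : 3 * ((2*x-1) * (UW x i).1) = (2*x-1) * (3 * (UW x i).1) := by ring
    rw [e1, hc, hd]
    have e2 : 2 * x * (UW x i).1 = 2 * x * ((UW x i).1) := rfl
    obtain ⟨e, he⟩ := (UW_mod x i).1
    rw [he]
    push_cast
    refine ⟨⟨(2 * x - 1) * c + 6 * (x-1) * d + (-1)^i * (2*i+1) * (-4 * i * (i+1)) - (-1)^i * 12 * i * (i+1), by ring⟩,
      ⟨(2*x-1) * d + 2 * e  - (-1)^i * 4 * i * (i+1), by ring⟩⟩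

lemma pell_all (x : ℤ) (hx : 3 ≤ x) (b : ℕ) : ∀ (U W : ℤ), 0 < U → 0 < W → U ≤ b →
    x * U^2 - (x-1) * W^2 = 1 → ∃ i, UW x i = (U, W) := by
  induction b with
  | zero => intro U W hU hW hb; simp at hb; omega
  | succ b ih =>
    intro U W hU hW hb h
    by_cases hs : W^2 ≤ 4 * x
    · have : x * (W^2 - U^2) = W^2 - 1 := by linarith
      set c := W^2 - U^2 with hc
      have c0 : 0 ≤ c := by by_contra hh; push Not at hh; nlinarith
      have c3 : c ≤ 3 := by by_contra hh; push Not at hh; nlinarith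
      have : c = 0 := by
        have f : (W - U) * (W + U) = c := by rw [hc]; ring
        by_contra h0
        have hWU : 0 < W - U := by
          by_contra hh; push Not at hh
          have : 0 < c := by omega
          nlinarith
        have : U = 1 ∨ 2 ≤ U := by omega
        rcases this with rfl | h2
        · have : W = 2 := by nlinarith
          subst this
          omega
        · nlinarith
      have w1 : W = 1 := by nlinarith
      have u1 : U = 1 := by nlinarith
      exact ⟨0, by simp [UW, w1, u1]⟩
    · push Not at hs
      have hU' : 0 < (2*x-1)*U - 2*(x-1)*W := by
        by_contra hh
        push Not at hh
        have : (2*x-1)*U ≤ 2*(x-1)*W := by linarith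
        have := pow_le_pow_left₀ (by nlinarith) this 2
        nlinarith
      have hW' : 0 < (2*x-1)*W - 2*x*U := by
        by_contra hh
        push Not at hh
        have : (2*x-1)*W ≤ 2*x*U := by linarith
        have := pow_le_pow_left₀ (by nlinarith) this 2
        nlinarith
      have hlt : (2*x-1)*U - 2*(x-1)*W < U := by
        have : U ≤ W := by
          by_contra hh
          push Not at hh
          nlinarith
        rcases this.lt_or_eq with h1 | h1
        · nlinarith
        · subst h1; nlinarith
      obtain ⟨i, hi⟩ := ih _ _ hU' hW' (by push_cast at hb; omega) (by linear_combination h)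
      refine ⟨i+1, ?_⟩
      simp only [UW, hi]
      ext <;> simp only <;> ring

lemma nagell_three (k I : ℕ) (h : (UW 3 I).1 = 3^k) (hk : 3 ≤ k) : False := by
  have h27 : (27:ℤ) ∣ (UW 3 I).1 := by
    rw [h]; exact (by norm_num : (27:ℤ) = 3^3) ▸ pow_dvd_pow 3 hk
  have key : ∀ I : ℕ, (27:ℤ) ∣ (UW 3 I).1 → I % 9 = 4 := by
    intro I
    induction I using Nat.strong_induction_on with
    | _ I ih =>
      intro hI
      by_cases h9 : I < 9
      · interval_cases I <;> revert hI <;> decide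
      · obtain ⟨J, rfl⟩ : ∃ J, I = J + 9 := ⟨I - 9, by omega⟩
        rw [(UW_add _ _ _).1] at hI
        have c1 : (CS 3 9).1 = 228167521 + 0 ∨ True := Or.inr trivial
        have hS : (27:ℤ) ∣ (3-1) * (CS 3 9).2 * (UW 3 J).2 := by
          have : (27:ℤ) ∣ (CS 3 9).2 := by decide
          exact Dvd.dvd.mul_right (Dvd.dvd.mul_left this _) _
        have h2 := (Int.dvd_add_left hS).1 hI
        have hcop : IsCoprime (27:ℤ) (CS 3 9).1 := by
          rw [Int.isCoprime_iff_gcd_eq_one]; decide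
        have := ih J (by omega) (hcop.dvd_of_dvd_mul_left h2)
        omega
  have h4 := key I h27
  obtain ⟨t, rfl⟩ : ∃ t, I = 4 + (2*4+1)*t := ⟨I / 9, by omega⟩
  have h17 : (17:ℤ) ∣ (UW 3 4).1 := by decide
  have := h17.trans (UW_dvd 3 4 t)
  rw [h] at this
  have p17 : Prime (17:ℤ) := by norm_num
  have := p17.dvd_of_dvd_pow this
  norm_num at this

theorem nagell (x q : ℤ) (p : ℕ) (hx : 3 ≤ x) (hp : 3 ≤ p) (hpo : Odd p)
    (h : x^p - 1 = q^2 * (x-1)) : x = 3 ∧ p = 5 := by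
  obtain ⟨k, rfl⟩ := hpo
  have hk : 1 ≤ k := by omega
  have hxk : 0 < x^k := by positivity
  have hq : 0 < |q| := by
    rw [abs_pos]
    rintro rfl
    have : 1 < x^(2*k+1) := one_lt_pow₀ (by omega) (by omega)
    simp at h; omega
  obtain ⟨I, hI⟩ := pell_all x hx (x^k).toNat (x^k) |q| hxk hq
    (by rw [Int.toNat_of_nonneg hxk.le]) (by rw [sq_abs]; linear_combination h)
  have hU : (UW x I).1 = x^k := by rw [hI]
  have hxJ : x ∣ (2*I+1 : ℤ) := by
    obtain ⟨c, hc⟩ := (UW_mod x I).1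
    have h1 : x ∣ (-1)^I * (2*I+1 : ℤ) := by
      have : x ∣ x^k := dvd_pow_self _ (by omega)
      rw [← hU, hc] at this
      exact (Int.dvd_add_left (dvd_mul_right x c)).1 this
    rcases neg_one_pow_eq_or ℤ I with e | e <;> rw [e] at h1
    · simpa using h1
    · rwa [neg_one_mul, dvd_neg] at h1
  -- every prime factor
  have main : ∀ q : ℕ, q.Prime → (q:ℤ) ∣ x → q = 3 ∧ ¬ (9 ∣ x) := by
    intro q hq hqx
    have hqJ : q ∣ 2*I+1 := by exact_mod_cast hqx.trans hxJ
    have hqo : Odd q := Odd.of_dvd_nat ⟨I, rfl⟩ hqJ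
    obtain ⟨r, hr⟩ := hqJ
    have hro : Odd r := Odd.of_dvd_nat ⟨I, rfl⟩ (Dvd.intro_left _ hr.symm)
    obtain ⟨i, hi⟩ := hqo
    obtain ⟨t, rfl⟩ := hro
    have hIi : I = i + (2*i+1)*t := by rw [hi] at hr; nlinarith
    have hi1 : 1 ≤ i := by have := hq.two_le; omega
    have hdvd : (UW x i).1 ∣ x^k := by rw [← hU, hIi]; exact UW_dvd x i t
    have hpos := (UW_pos x hx i).1
    obtain ⟨u, hu⟩ : ∃ u : ℕ, (UW x i).1 = u := ⟨(UW x i).1.toNat, by omega⟩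
    rw [hu] at hdvd hpos
    obtain ⟨c, hc⟩ := (UW_mod x i).1
    have hpp := Nat.eq_prime_pow_of_unique_prime_dvd (n := u) (p := q) (by omega) (by
      intro d hd hdu
      have hdx : (d:ℤ) ∣ x := (Nat.prime_iff_prime_int.1 hd).dvd_of_dvd_pow
        ((Int.natCast_dvd_natCast.2 hdu).trans hdvd)
      have : (d:ℤ) ∣ (-1)^i * (2*i+1) := by
        have h2 := Int.natCast_dvd_natCast.2 hdu
        rw [← hu, hc] at h2
        exact (Int.dvd_add_left (hdx.mul_right c)).1 h2
      have : (d:ℤ) ∣ (q:ℤ) := by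
        rw [hi]; push_cast
        rcases neg_one_pow_eq_or ℤ i with e | e <;> rw [e] at this
        · simpa using this
        · rwa [neg_one_mul, dvd_neg] at this
      exact (Nat.prime_dvd_prime_iff_eq hd hq).1 (by exact_mod_cast this))
    set s := u.primeFactorsList.length
    have hs : 2 ≤ s := by
      by_contra hh
      push Not at hh
      have : u ≤ q := by
        rw [hpp]
        calc q^s ≤ q^1 := Nat.pow_le_pow_right hq.pos (by omega)
          _ = q := pow_one q
      omega
    have hq2 : (q:ℤ)^2 ∣ (UW x i).1 := by
      rw [hu, hpp]; push_cast; exact pow_dvd_pow _ hs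
    obtain ⟨c', hc'⟩ := (UW_mod2 x i).1
    have h3 : (q:ℤ)^2 ∣ (-1)^i * (2*i+1) * (3 - 2 * x * i * (i+1)) := by
      have h4 : (q:ℤ)^2 ∣ 3 * (UW x i).1 := hq2.mul_left 3
      rw [hc'] at h4
      exact (Int.dvd_add_left ((pow_dvd_pow_of_dvd hqx 2).mul_right c')).1 h4
    have h5 : (q:ℤ)^2 ∣ q * (3 - 2 * x * i * (i+1)) := by
      have hqi : (q:ℤ) = 2*i+1 := by rw [hi]; push_cast; rfl
      rw [← hqi] at h3
      rcases neg_one_pow_eq_or ℤ i with e | e <;> rw [e] at h3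
      · simpa using h3
      · rwa [neg_one_mul, neg_mul, dvd_neg] at h3
    have hq0 : (q:ℤ) ≠ 0 := by exact_mod_cast hq.ne_zero
    rw [sq] at h5
    have h6 := (mul_dvd_mul_iff_left hq0).1 h5
    have h7 : (q:ℤ) ∣ 3 := by
      have : (q:ℤ) ∣ 2 * x * i * (i+1) := (((hqx.mul_left 2).mul_right _).mul_right _)
      have := dvd_add h6 this
      simpa using this
    have hq3 : q = 3 := (Nat.prime_dvd_prime_iff_eq hq Nat.prime_three).1 (by exact_mod_cast h7)
    refine ⟨hq3, ?_⟩
    have : i = 1 := by omega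
    subst this
    subst hq3
    simp [UW] at hq2
    omega
  have hx3 : x = 3 := by
    obtain ⟨y, rfl⟩ : ∃ y : ℕ, x = y := ⟨x.toNat, by omega⟩
    have hpp := Nat.eq_prime_pow_of_unique_prime_dvd (n := y) (p := 3) (by omega)
      (fun hd hdy => (main _ hd (by exact_mod_cast hdy)).1)
    set s := y.primeFactorsList.length
    have h9 : ¬ (9 ∣ (y:ℤ)) := by
      have : 3 ∣ y := by
        rw [hpp]; apply dvd_pow_self
        intro h0; rw [h0] at hpp; simp at hpp; omega
      exact (main 3 Nat.prime_three (by exact_mod_cast this)).2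
    have : s < 2 := by
      by_contra hh
      push Not at hh
      apply h9
      have : 3^2 ∣ y := by rw [hpp]; exact pow_dvd_pow _ hh
      exact_mod_cast this
    interval_cases s <;> simp at hpp <;> omega
  subst hx3
  refine ⟨rfl, ?_⟩
  have : k < 3 := by
    by_contra hh
    exact nagell_three k I hU (by omega)
  have : k ≠ 1 := by
    rintro rfl
    rcases Nat.eq_zero_or_pos I with rfl | h1
    · simp [UW] at hU
    · have := (UW_pos 3 (by norm_num) I).1
      rw [hU] at this
      omega
  omega

open Complex ComplexConjugate

/-- integral elements of ℚ(δ) -/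
def QI (δ w : ℂ) : Prop := (∃ u v : ℚ, w = u + v * δ) ∧ IsIntegral ℤ w

lemma rat_int (r : ℚ) (h : IsIntegral ℤ (r : ℂ)) : ∃ z : ℤ, r = z := by
  have h2 : IsIntegral ℤ r := by
    have : (r : ℂ) = algebraMap ℚ ℂ r := by simp
    rw [this] at h
    exact (isIntegral_algebraMap_iff (algebraMap ℚ ℂ).injective).1 h
  obtain ⟨z, hz⟩ := IsIntegrallyClosed.isIntegral_iff.1 h2
  exact ⟨z, by simpa using hz.symm⟩

lemma rat_sq_int (r : ℚ) (a : ℤ) (h : r^2 = a) : ∃ z : ℤ, r = z := by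
  have h2 : IsIntegral ℤ r := by
    apply IsIntegral.of_pow (n := 2) (by norm_num)
    rw [h]; exact isIntegral_algebraMap
  obtain ⟨z, hz⟩ := IsIntegrallyClosed.isIntegral_iff.1 h2
  exact ⟨z, by simpa using hz.symm⟩

lemma QI.mul {δ w z : ℂ} {d : ℤ} (hd : δ^2 = d) (hw : QI δ w) (hz : QI δ z) : QI δ (w*z) := by
  obtain ⟨⟨u, v, h⟩, hi⟩ := hw
  obtain ⟨⟨u', v', h'⟩, hi'⟩ := hz
  refine ⟨⟨u*u'+v*v'*d, u*v'+u'*v, ?_⟩, hi.mul hi'⟩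
  rw [h, h']; push_cast; linear_combination (v:ℂ)*v'*hd

lemma QI.pow {δ w : ℂ} {d : ℤ} (hd : δ^2 = d) (hw : QI δ w) (k : ℕ) : QI δ (w^k) := by
  induction k with
  | zero => exact ⟨⟨1, 0, by simp⟩, by simpa using isIntegral_one⟩
  | succ k ih => rw [pow_succ]; exact ih.mul hd hw

lemma conj_sqrt {δ : ℂ} {d : ℤ} (hd : δ^2 = d) (hneg : d < 0) : conj δ = -δ := by
  have him := congrArg Complex.im hd
  have hre := congrArg Complex.re hd
  simp [sq] at him hre
  have h0 : δ.re = 0 := by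
    by_contra h
    have h1 : δ.im = 0 := by
      have : δ.re * δ.im = 0 := by linarith
      exact (mul_eq_zero.1 this).resolve_left h
    rw [h1] at hre
    have : (d:ℝ) < 0 := by exact_mod_cast hneg
    nlinarith [mul_self_nonneg δ.re]
  apply Complex.ext <;> simp [h0]

lemma conj_int {w : ℂ} (h : IsIntegral ℤ w) : IsIntegral ℤ (conj w) :=
  h.map ((starRingEnd ℂ).toIntAlgHom)

lemma QI.tn {δ w : ℂ} {d : ℤ} (hd : δ^2 = d) (hneg : d < 0) (hw : QI δ w) :
    ∃ T N : ℤ, w + conj w = T ∧ w * conj w = N ∧ 0 ≤ N ∧ T^2 ≤ 4*N ∧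
      ∃ v : ℚ, w - conj w = 2 * v * δ ∧ 4 * v^2 * d = T^2 - 4*N := by
  obtain ⟨⟨u, v, h⟩, hi⟩ := hw
  have hc := conj_sqrt hd hneg
  have hcw : conj w = u - v*δ := by
    rw [h, map_add, map_mul, hc]
    have a : conj (u:ℂ) = u := by simp
    have b : conj (v:ℂ) = v := by simp
    rw [a, b]; ring
  have ht : w + conj w = ((2*u : ℚ) : ℂ) := by rw [hcw, h]; push_cast; ring
  have hn : w * conj w = ((u^2 - v^2*d : ℚ) : ℂ) := by
    rw [hcw, h]; push_cast; linear_combination -(v:ℂ)^2*hd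
  obtain ⟨T, hT⟩ := rat_int (2*u) (ht ▸ hi.add (conj_int hi))
  obtain ⟨N, hN⟩ := rat_int (u^2 - v^2*d) (hn ▸ hi.mul (conj_int hi))
  have hdq : (d:ℚ) < 0 := by exact_mod_cast hneg
  have key : 4 * v^2 * d = (T:ℚ)^2 - 4*N := by rw [← hT, ← hN]; ring
  have hvd : v^2 * d ≤ 0 := mul_nonpos_of_nonneg_of_nonpos (sq_nonneg v) hdq.le
  refine ⟨T, N, ?_, ?_, ?_, ?_, v, ?_, key⟩
  · rw [ht, hT]; simp
  · rw [hn, hN]; simp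
  · have : (0:ℚ) ≤ N := by rw [← hN]; nlinarith [sq_nonneg u]
    exact_mod_cast this
  · have : (T:ℚ)^2 ≤ 4*N := by linarith
    exact_mod_cast this
  · rw [hcw, h]; ring

lemma luc1 (z z' : ℂ) (T N : ℤ) (h1 : z + z' = T) (h2 : z * z' = N) (k : ℕ) :
    ∃ a b : ℤ, z^(2*k+1) + z'^(2*k+1) = T * a ∧ z^(2*k+2) + z'^(2*k+2) = b := by
  induction k with
  | zero => exact ⟨1, T^2 - 2*N, by simp [h1], by push_cast; rw [← h1, ← h2]; ring⟩
  | succ k ih =>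
    obtain ⟨a, b, ha, hb⟩ := ih
    have e1 : z^(2*(k+1)+1) + z'^(2*(k+1)+1) = T * (b - N * a) := by
      calc _ = (z + z') * (z^(2*k+2) + z'^(2*k+2)) - z*z' * (z^(2*k+1) + z'^(2*k+1)) := by ring
        _ = _ := by rw [h1, h2, ha, hb]; ring
    refine ⟨b - N * a, T * (T * (b - N*a)) - N * b, by rw [e1]; push_cast; ring, ?_⟩
    calc _ = (z + z') * (z^(2*(k+1)+1) + z'^(2*(k+1)+1)) - z*z' * (z^(2*k+2) + z'^(2*k+2)) := by ring
        _ = _ := by rw [h1, h2, e1, hb]; push_cast; ring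

lemma luc2 (z z' : ℂ) (T N : ℤ) (h1 : z + z' = T) (h2 : z * z' = N) (hT : Odd T) (hN : Odd N)
    (k : ℕ) :
    ∃ a b c : ℤ, z^(3*k) + z'^(3*k) = (2*a : ℤ) ∧ z^(3*k+1) + z'^(3*k+1) = (2*b+1 : ℤ) ∧
      z^(3*k+2) + z'^(3*k+2) = (2*c+1 : ℤ) := by
  obtain ⟨t, rfl⟩ := hT
  obtain ⟨m, rfl⟩ := hN
  have hrec : ∀ j, z^(j+2) + z'^(j+2) = (2*t+1:ℤ) * (z^(j+1) + z'^(j+1)) - (2*m+1:ℤ) * (z^j+z'^j) := by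
    intro j; rw [← h1, ← h2]; ring
  induction k with
  | zero =>
    refine ⟨1, t, 2*t^2+2*t - 2*m-1, by norm_num, by simp [h1], ?_⟩
    have := hrec 0
    simp only [zero_add, pow_one, h1, pow_zero] at this
    simp only [mul_zero, zero_add]
    rw [this]; push_cast; ring
  | succ k ih =>
    obtain ⟨a, b, c, ha, hb, hc⟩ := ih
    have r0 := hrec (3*k+1)
    rw [show 3*k+1+2 = 3*(k+1) by ring, show 3*k+1+1 = 3*k+2 by ring, hb, hc] at r0
    have r1 := hrec (3*k+2)
    rw [show 3*k+2+2 = 3*(k+1)+1 by ring, show 3*k+2+1 = 3*(k+1) by ring, hc, r0] at r1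
    have r2 := hrec (3*(k+1))
    rw [r1, r0] at r2
    refine ⟨t*(2*c+1)+c - m*(2*b+1) - b, ?_⟩
    set A := t*(2*c+1)+c - m*(2*b+1) - b with hA
    refine ⟨(2*t+1)*A - m*(2*c+1) - c - 1, ?_⟩
    set B := (2*t+1)*A - m*(2*c+1) - c - 1 with hB
    refine ⟨t*(2*B+1) + B - (2*m+1)*A, ?_, ?_, ?_⟩
    · rw [r0, hA]; push_cast; ring
    · rw [r1, hB, hA]; push_cast; ring
    · rw [r2, hB, hA]; push_cast; ring

/-- the core when `1 + δ` is a pure `p`-th power -/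
lemma core_pow {δ z : ℂ} {V : ℤ} {n p m : ℕ} (hV : 3 ≤ V) (hVo : Odd V)
    (hn : n = m * p) (hm : 1 ≤ m) (hp : p.Prime) (hp2 : p ≠ 2)
    (hd : δ^2 = ((1 - V^n : ℤ) : ℂ)) (hz : QI δ z) (h : z^p = 1 + δ) : n = 5 ∧ V = 3 := by
  have hp3 : 3 ≤ p := by have := hp.two_le; omega
  have hpo : Odd p := hp.odd_of_ne_two hp2
  have hVn : 1 < V^n := one_lt_pow₀ (by omega) (by rw [hn]; positivity)
  have hneg : 1 - V^n < 0 := by omega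
  have hc := conj_sqrt hd hneg
  obtain ⟨T, N, hT, hN, hN0, hTN, v, -, hv2⟩ := hz.tn hd hneg
  have h' : (conj z)^p = 1 - δ := by
    rw [← map_pow, h, map_add, hc]; simp; ring
  have hNp : N^p = (V^m)^p := by
    have : (N:ℂ)^p = ((V:ℂ)^m)^p := by
      rw [← hN, mul_pow, h, h', ← pow_mul, ← hn]
      push_cast at hd
      linear_combination -hd
    exact_mod_cast this
  have hNV : N = V^m := by
    exact (pow_left_inj₀ hN0 (by positivity) (by omega)).1 hNp
  have hN3 : 3 ≤ N := by
    rw [hNV]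
    calc 3 ≤ V := hV
      _ = V^1 := (pow_one V).symm
      _ ≤ V^m := pow_le_pow_right₀ (by omega) hm
  have hNo : Odd N := by rw [hNV]; exact hVo.pow
  have hTd : T ∣ 2 := by
    obtain ⟨k, hk⟩ := hpo
    obtain ⟨a, b, ha, -⟩ := luc1 z (conj z) T N hT hN k
    rw [← hk, h, h'] at ha
    refine ⟨a, ?_⟩
    have : ((2:ℤ):ℂ) = ((T * a : ℤ) : ℂ) := by push_cast; rw [← ha]; ring
    exact_mod_cast this
  have hT4 : T.natAbs ∣ 2 := by
    have := Int.natAbs_dvd_natAbs.2 hTd; simpa using this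
  rcases (Nat.dvd_prime Nat.prime_two).1 hT4 with h1 | h1
  · exfalso
    have hTo : Odd T := by rw [← Int.natAbs_odd, h1]; exact odd_one
    obtain ⟨a, b, c, ha, hb, hc⟩ := luc2 z (conj z) T N hT hN hTo hNo (p/3)
    have hs : z^p + (conj z)^p = ((2:ℤ):ℂ) := by rw [h, h']; push_cast; ring
    have hmod : p % 3 = 0 := by
      have : p % 3 = 0 ∨ p % 3 = 1 ∨ p % 3 = 2 := by omega
      rcases this with h3 | h3 | h3
      · exact h3
      · rw [show 3*(p/3)+1 = p by omega, hs] at hb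
        have : (2:ℤ) = 2*b+1 := by exact_mod_cast hb
        omega
      · rw [show 3*(p/3)+2 = p by omega, hs] at hc
        have : (2:ℤ) = 2*c+1 := by exact_mod_cast hc
        omega
    have hp3' : p = 3 :=
      ((Nat.prime_dvd_prime_iff_eq Nat.prime_three hp).1 (Nat.dvd_of_mod_eq_zero hmod)).symm
    subst hp3'
    have : T^3 - 3*T*N = 2 := by
      have : (T:ℂ)^3 - 3*T*N = ((2:ℤ):ℂ) := by rw [← hs, ← hT, ← hN]; ring
      exact_mod_cast this
    rcases Int.natAbs_eq T with h2 | h2 <;> rw [h1] at h2 <;> rw [h2] at this <;> norm_num at this <;> omega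
  · have hT2 : T^2 = 4 := by
      rw [← Int.natAbs_sq, h1]; norm_num
    have hTq : (T:ℚ)^2 = 4 := by exact_mod_cast hT2
    rw [hTq] at hv2
    have hNq : (3:ℚ) ≤ N := by exact_mod_cast hN3
    have hv0 : v ≠ 0 := by
      rintro rfl
      norm_num at hv2; linarith
    have hq : (v⁻¹)^2 * ((N:ℚ) - 1) = (N:ℚ)^p - 1 := by
      have hVN : (V:ℚ)^n = (N:ℚ)^p := by rw [hNV, hn, pow_mul]; push_cast; rfl
      push_cast at hv2
      rw [hVN] at hv2
      field_simp
      linarith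
    obtain ⟨s, hs⟩ : N - 1 ∣ N^p - 1 := by simpa using sub_dvd_pow_sub_pow N 1 p
    have hsq : (v⁻¹)^2 = (s:ℚ) := by
      have : (N:ℚ)^p - 1 = (N - 1) * s := by exact_mod_cast hs
      rw [this] at hq
      have h0 : (N:ℚ) - 1 ≠ 0 := by linarith
      apply mul_right_cancel₀ h0
      rw [hq]; ring
    obtain ⟨q, hqq⟩ := rat_sq_int _ _ hsq
    have hfin : N^p - 1 = q^2 * (N-1) := by
      rw [hqq] at hq
      have : (N:ℚ)^p - 1 = q^2 * (N-1) := hq.symm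
      exact_mod_cast this
    obtain ⟨hN3', hp5⟩ := nagell N q p hN3 hp3 hpo hfin
    have hm1 : m = 1 := by
      by_contra hne
      have : V^2 ≤ V^m := pow_le_pow_right₀ (by omega) (by omega)
      nlinarith
    subst hm1
    rw [hN3'] at hNV
    refine ⟨by omega, by simpa using hNV.symm⟩

lemma core {δ z e f : ℂ} {V : ℤ} {n p m : ℕ} (hV : 3 ≤ V) (hVo : Odd V)
    (hn : n = m * p) (hm : 1 ≤ m) (hp : p.Prime) (hp2 : p ≠ 2)
    (hd : δ^2 = ((1 - V^n : ℤ) : ℂ)) (hz : QI δ z) (he : QI δ e) (hf : QI δ f) (hef : e * f = 1)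
    (h : z^p * e = 1 + δ) : n = 5 ∧ V = 3 := by
  have hp3 : 3 ≤ p := by have := hp.two_le; omega
  have hVn : 1 < V^n := one_lt_pow₀ (by omega) (by rw [hn]; positivity)
  have hneg : 1 - V^n < 0 := by omega
  have hc := conj_sqrt hd hneg
  obtain ⟨t, N, ht, hN, hN0, htN, v, hv1, hv2⟩ := he.tn hd hneg
  obtain ⟨t', N', ht', hN', hN0', -, -⟩ := hf.tn hd hneg
  have hNN : N * N' = 1 := by
    have : (N:ℂ) * N' = 1 := by
      rw [← hN, ← hN']
      calc _ = (e*f) * conj (e*f) := by rw [map_mul]; ring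
        _ = 1 := by rw [hef]; simp
    exact_mod_cast this
  have hN1 : N = 1 := by
    rcases Int.eq_one_or_neg_one_of_mul_eq_one hNN with h | h <;> omega
  subst hN1
  have hquad : e^2 - t*e + 1 = 0 := by
    rw [← ht]; push_cast at hN; linear_combination -hN
  have ht2 : -2 ≤ t ∧ t ≤ 2 := by constructor <;> nlinarith
  by_cases hex : p = 3 ∧ t^2 = 1
  · exfalso
    obtain ⟨rfl, ht1⟩ := hex
    obtain ⟨T, M, hT, hM, hM0, -, -⟩ := hz.tn hd hneg
    have hcj : (conj z)^3 * conj e = 1 - δ := by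
      rw [← map_pow, ← map_mul, h, map_add, hc]; simp; ring
    have hMV : M^3 = V^n := by
      have : (M:ℂ)^3 = (V:ℂ)^n := by
        push_cast at hd hN
        have : (z * conj z)^3 * (e * conj e) = (1+δ)*(1-δ) := by rw [← h, ← hcj]; ring
        rw [hM, hN] at this
        linear_combination this - hd
      exact_mod_cast this
    have hMo : Odd M := by
      have : Odd (M^3) := by rw [hMV]; exact hVo.pow
      exact (Int.odd_pow' (by norm_num)).1 this
    have hz3 : z^3 = (1+δ) * conj e := by push_cast at hN; rw [← h]; linear_combination -z^3*hN
    have hz3' : (conj z)^3 = (1-δ) * e := by push_cast at hN; rw [← hcj]; linear_combination -(conj z)^3*hN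
    set S := T^3 - 3*T*M - t with hS
    have hSc : (S:ℂ) = -(2*v*δ^2) := by
      have : (S:ℂ) = z^3 + (conj z)^3 - (e + conj e) := by
        rw [hS]; push_cast; rw [← hT, ← hM, ← ht]; ring
      rw [this, hz3, hz3']
      linear_combination (-δ) * hv1
    have hSq : (S:ℚ) = -(2*v*(1-V^n)) := by
      rw [hd] at hSc
      exact_mod_cast hSc
    have hS2 : S^2 = 3 * (V^n - 1) := by
      have htq : (t:ℚ)^2 = 1 := by exact_mod_cast ht1
      rw [htq] at hv2
      push_cast at hv2
      have : (S:ℚ)^2 = 3 * (V^n - 1) := by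
        rw [hSq]; linear_combination (1-(V:ℚ)^n) * hv2
      exact_mod_cast this
    have hSe : Even S := by
      have : Even (S^2) := by
        rw [hS2]; exact (Odd.sub_odd hVo.pow odd_one).mul_left 3
      exact (Int.even_pow' (by norm_num)).1 this
    have hto : Odd t := by
      have : Odd (t^2) := by rw [ht1]; exact odd_one
      exact (Int.odd_pow' (by norm_num)).1 this
    have hTe : Even (T^3 - 3*T*M) := by
      rcases Int.even_or_odd T with hh | hh
      · exact (Int.even_pow.2 ⟨hh, by norm_num⟩).sub ((hh.mul_left 3).mul_right M)
      · exact hh.pow.sub_odd (((by decide : Odd (3:ℤ)).mul hh).mul hMo)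
    have : Odd S := hTe.sub_odd hto
    exact (Int.not_even_iff_odd.2 this) hSe
  · have hpp : e^(p^2) = e := by
      have h4 : t^2 ≠ 1 → e^4 = 1 := by
        intro hne
        obtain ⟨a, b⟩ := ht2
        interval_cases t
        · push_cast at hquad; have : e = -1 := by
            have : (e+1)^2 = 0 := by linear_combination hquad
            have := pow_eq_zero_iff (two_ne_zero) |>.1 this
            linear_combination this
          rw [this]; norm_num
        · norm_num at hne
        · push_cast at hquad; linear_combination (e^2-1)*hquad
        · norm_num at hne
        · push_cast at hquad; have : e = 1 := by
            have : (e-1)^2 = 0 := by linear_combination hquad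
            have := pow_eq_zero_iff (two_ne_zero) |>.1 this
            linear_combination this
          rw [this]; norm_num
      have h12 : e^12 = 1 := by
        by_cases ht1 : t^2 = 1
        · have ht1c : (t:ℂ)^2 = 1 := by exact_mod_cast ht1
          have h6 : e^6 = 1 := by
            have h3 : e^3 = -t := by linear_combination (e + t)*hquad + e * ht1c
            calc e^6 = (e^3)^2 := by ring
              _ = 1 := by rw [h3]; linear_combination ht1c
          calc e^12 = (e^6)^2 := by ring
            _ = 1 := by rw [h6]; norm_num
        · calc e^12 = (e^4)^3 := by ring
            _ = 1 := by rw [h4 ht1]; norm_num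
      by_cases hp33 : p = 3
      · subst hp33
        have := h4 (fun hh => hex ⟨rfl, hh⟩)
        calc e^(3^2) = (e^4)^2 * e := by ring
          _ = e := by rw [this]; ring
      · have hmod : p^2 % 12 = 1 := by
          have a : p % 2 = 1 := Nat.odd_iff.1 (hp.odd_of_ne_two hp2)
          have b : p % 3 ≠ 0 := fun hh => hp33
            ((Nat.prime_dvd_prime_iff_eq Nat.prime_three hp).1 (Nat.dvd_of_mod_eq_zero hh)).symm
          have : p % 12 = 1 ∨ p % 12 = 5 ∨ p % 12 = 7 ∨ p % 12 = 11 := by omega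
          rcases this with c | c | c | c <;> rw [Nat.pow_mod, c]
        calc e^(p^2) = e^(12 * (p^2/12) + p^2 % 12) := by rw [Nat.div_add_mod]
          _ = e := by rw [hmod, pow_add, pow_mul, h12]; simp
    refine core_pow hV hVo hn hm hp hp2 hd (hz.mul hd (he.pow hd p)) ?_
    rw [mul_pow, ← pow_mul, ← sq, hpp, h]

lemma mem_form {δ : ℂ} {d : ℤ} (hd : δ^2 = d) (hneg : d < 0) (w : ℂ)
    (hw : w ∈ IntermediateField.adjoin ℚ {δ}) : ∃ u v : ℚ, w = u + v * δ := by
  induction hw using IntermediateField.adjoin_induction with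
  | mem x hx => 
    rw [Set.mem_singleton_iff] at hx
    exact ⟨0, 1, by simp [hx]⟩
  | algebraMap x => exact ⟨x, 0, by simp⟩
  | add x y _ _ hx hy =>
    obtain ⟨u, v, rfl⟩ := hx
    obtain ⟨u', v', rfl⟩ := hy
    exact ⟨u+u', v+v', by push_cast; ring⟩
  | inv x _ hx =>
    obtain ⟨u, v, rfl⟩ := hx
    have hdq : (d:ℚ) < 0 := by exact_mod_cast hneg
    by_cases h0 : u^2 - v^2*d = 0
    · have hu : u = 0 := by nlinarith [sq_nonneg u, sq_nonneg v]
      have hv : v = 0 := by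
        rw [hu] at h0
        have : v^2 = 0 := by
          have : v^2 * d = 0 := by linarith
          exact (mul_eq_zero.1 this).resolve_right hdq.ne
        exact pow_eq_zero_iff two_ne_zero |>.1 this
      exact ⟨0, 0, by simp [hu, hv]⟩
    · refine ⟨u / (u^2 - v^2*d), -v / (u^2 - v^2*d), ?_⟩
      have h0c : (u:ℂ)^2 - v^2*d ≠ 0 := by exact_mod_cast h0
      have hm : ((u:ℂ) + v*δ) * (u - v*δ) = (u:ℂ)^2 - v^2*d := by linear_combination -(v:ℂ)^2*hd
      have : ((u:ℂ) + v*δ) ≠ 0 := by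
        intro h; rw [h, zero_mul] at hm; exact h0c hm.symm
      apply inv_eq_of_mul_eq_one_right
      push_cast
      field_simp
      linear_combination hm
  | mul x y _ _ hx hy =>
    obtain ⟨u, v, rfl⟩ := hx
    obtain ⟨u', v', rfl⟩ := hy
    exact ⟨u*u'+v*v'*d, u*v'+u'*v, by push_cast; linear_combination (v:ℂ)*v'*hd⟩

/-- Let `n ≥ 3` and `V ≥ 3` be odd integers with `(n, V) ≠ (5, 3)`. Then the class number
of the imaginary quadratic field `ℚ(√(1 − Vⁿ))` is divisible by `n`. -/
theorem classNumber_dvd_of_one_sub_pow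
    (n : ℕ) (V : ℤ) (hn : 3 ≤ n) (hnodd : Odd n) (hV : 3 ≤ V) (hVodd : Odd V)
    (hexc : ¬ (n = 5 ∧ V = 3)) :
    n ∣ classNumSqrt (1 - V ^ n) := by
  unfold classNumSqrt
  have hVn : 1 < V^n := one_lt_pow₀ (by omega) (by omega)
  have hneg : 1 - V^n < 0 := by omega
  set d : ℤ := 1 - V^n with hddef
  set δ : ℂ := (d : ℂ) ^ ((1 : ℂ) / 2) with hδ
  have hd : δ^2 = (d:ℂ) := by
    rw [hδ, one_div]
    exact_mod_cast Complex.cpow_nat_inv_pow (d:ℂ) (n := 2) two_ne_zero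
  have hform : ∀ w : Qsqrt d, ∃ u v : ℚ, (w:ℂ) = u + v * δ := fun w => mem_form hd hneg _ w.2
  have hδint : IsIntegral ℤ δ := by
    apply IsIntegral.of_pow (n := 2) (by norm_num)
    rw [hd]; exact isIntegral_algebraMap
  have hfd : FiniteDimensional ℚ (Qsqrt d) :=
    IntermediateField.adjoin.finiteDimensional (hδint.tower_top)
  have hnf : NumberField (Qsqrt d) := { to_charZero := inferInstance, to_finiteDimensional := hfd }
  let R := NumberField.RingOfIntegers (Qsqrt d)
  have hQI : ∀ r : R, QI δ ((r : Qsqrt d) : ℂ) := fun r =>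
    ⟨hform _, r.2.map ((Qsqrt d).val.restrictScalars ℤ)⟩
  have hinj : ∀ r s : R, ((r : Qsqrt d) : ℂ) = ((s : Qsqrt d) : ℂ) → r = s := fun r s h =>
    NumberField.RingOfIntegers.ext (Subtype.ext h)
  have hδK : δ ∈ Qsqrt d := IntermediateField.mem_adjoin_simple_self ℚ δ
  obtain ⟨D, hD⟩ : ∃ D : R, ((D : Qsqrt d) : ℂ) = δ := by
    refine ⟨⟨⟨δ, hδK⟩, ?_⟩, rfl⟩
    exact (isIntegral_algHom_iff ((Qsqrt d).val.restrictScalars ℤ) 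
      (Subtype.val_injective)).1 hδint
  have hmul : (1 + D) * (1 - D) = (V:R)^n := by
    apply hinj
    push_cast [hD]
    rw [hddef] at hd
    push_cast at hd
    simp only [map_intCast]
    push_cast [hD]
    linear_combination -hd
  have hsum : (1 + D) + (1 - D) = 2 := by ring
  have hcop : IsCoprime (1 + D) (1 - D) := by
    obtain ⟨k, hk⟩ := hVodd.pow (n := n)
    have hk' : (1 + D) * (1 - D) = 2 * k + 1 := by
      have gen : ∀ (S : Type) [CommRing S], (V:S)^n = 2 * k + 1 := by
        intro S _
        exact_mod_cast congrArg (Int.cast : ℤ → S) hk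
      rw [hmul]; exact gen R
    refine ⟨(1 - D) - k, -k, ?_⟩
    linear_combination hk' - k * hsum
  obtain ⟨I, hI⟩ : ∃ I : Ideal R, Ideal.span {1 + D} = I^n := by
    refine exists_eq_pow_of_mul_eq_pow (b := Ideal.span {1 - D}) (c := Ideal.span {(V:R)}) ?_ ?_
    · rw [← Ideal.isCoprime_span_singleton_iff] at hcop
      rw [Ideal.isCoprime_iff_gcd.1 hcop]
      exact isUnit_one
    · rw [Ideal.span_singleton_mul_span_singleton, hmul, Ideal.span_singleton_pow]
  have hα0 : 1 + D ≠ 0 := by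
    intro h; rw [h, zero_mul] at hmul
    have : (V:R) ≠ 0 := by exact_mod_cast (by omega : V ≠ 0)
    exact pow_ne_zero n this hmul.symm
  have hI0 : I ≠ 0 := by
    rintro rfl
    rw [zero_pow (by omega)] at hI
    exact hα0 (Ideal.span_singleton_eq_bot.1 hI)
  have hIm : I ∈ nonZeroDivisors (Ideal R) := mem_nonZeroDivisors_of_ne_zero hI0
  have hord : orderOf (ClassGroup.mk0 ⟨I, hIm⟩) = n := by
    apply orderOf_eq_of_pow_and_pow_div_prime (by omega)
    · rw [← map_pow, ClassGroup.mk0_eq_one_iff]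
      exact ⟨1 + D, by simpa using hI.symm⟩
    · intro p hp hpn h1
      rw [← map_pow, ClassGroup.mk0_eq_one_iff] at h1
      obtain ⟨⟨b, hb⟩⟩ := h1
      obtain ⟨m, hm⟩ := hpn
      have hdiv : n / p = m := by rw [hm]; exact Nat.mul_div_cancel_left m hp.pos
      rw [hdiv] at hb
      have hb' : I^m = Ideal.span {b} := by simpa using hb
      have hassoc : Associated (b^p) (1 + D) := by
        rw [← Ideal.span_singleton_eq_span_singleton, hI, hm, mul_comm, pow_mul, hb',
          Ideal.span_singleton_pow]
      obtain ⟨e, he⟩ := hassoc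
      apply hexc
      have hm1 : 1 ≤ m := by
        rcases Nat.eq_zero_or_pos m with rfl | h
        · omega
        · exact h
      have hp2 : p ≠ 2 := by
        rintro rfl
        exact (Nat.not_even_iff_odd.2 hnodd) ⟨m, by omega⟩
      refine core (δ := δ) (z := ((b : Qsqrt d) : ℂ)) (e := (((e:R) : Qsqrt d) : ℂ))
        (f := (((e⁻¹:Rˣ):R) : Qsqrt d)) hV hVodd (by rw [hm, mul_comm]) hm1 hp hp2 hd
        (hQI _) (hQI _) (hQI _) ?_ ?_
      · have := congrArg (fun r : R => ((r : Qsqrt d) : ℂ)) e.mul_inv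
        simpa using this
      · have := congrArg (fun r : R => ((r : Qsqrt d) : ℂ)) he
        simpa [hD] using this
  rw [← hord]
  exact orderOf_dvd_natCard _
end

section
/- For any odd positive integer n and any positive integer m, there are infinitely many negative integers d such that both ideal class groups of the imaginary quadratic fields ℚ(√d) and ℚ(√(d + m)) contain an element of order n. -/
/-- The chosen square root of `d`. -/
noncomputable def rtd (d : ℤ) : ℂ := (d : ℂ) ^ ((1 : ℂ) / 2)

lemma rtd_sq (d : ℤ) : rtd d ^ 2 = d := by
  unfold rtd
  rw [one_div]
  exact Complex.cpow_ofNat_inv_pow _ 2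

lemma rtd_conj (d : ℤ) (hd : d < 0) : (starRingEnd ℂ) (rtd d) = - rtd d := by
  have h := rtd_sq d
  have h1 := congrArg Complex.re h
  have h2 := congrArg Complex.im h
  have hd' : (d : ℝ) < 0 := by exact_mod_cast hd
  simp [pow_two] at h1 h2
  have hre : (rtd d).re = 0 := by
    have h3 : (rtd d).re * (rtd d).im = 0 := by linarith
    rcases mul_eq_zero.1 h3 with h4 | h4
    · exact h4
    · rw [h4] at h1
      nlinarith [mul_self_nonneg (rtd d).re]
  apply Complex.ext
  · simp [hre]
  · simp

lemma rtd_mem (d : ℤ) : rtd d ∈ Qsqrt d :=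
  IntermediateField.mem_adjoin_simple_self ℚ _

lemma rtd_int (d : ℤ) : IsIntegral ℤ (rtd d) := by
  apply IsIntegral.of_pow (n := 2) (by norm_num)
  rw [rtd_sq]
  exact isIntegral_algebraMap (R := ℤ) (x := d)

lemma Qsqrt_nf (d : ℤ) : NumberField (Qsqrt d) := by
  have : FiniteDimensional ℚ (Qsqrt d) := by
    apply IntermediateField.adjoin.finiteDimensional
    exact (rtd_int d).tower_top
  exact { }

lemma mem_form_s16 (d : ℤ) (hd : d < 0) (z : ℂ) (hz : z ∈ Qsqrt d) :
    ∃ a b : ℚ, z = a + b * rtd d := by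
  have hsq := rtd_sq d
  unfold Qsqrt at hz
  induction hz using IntermediateField.adjoin_induction with
  | mem x hx =>
    refine ⟨0, 1, ?_⟩
    rw [Set.mem_singleton_iff] at hx
    rw [hx]; simp [rtd]
  | algebraMap x => exact ⟨x, 0, by simp⟩
  | add x y _ _ h1 h2 =>
    obtain ⟨a, b, rfl⟩ := h1
    obtain ⟨a', b', rfl⟩ := h2
    exact ⟨a + a', b + b', by push_cast; ring⟩
  | mul x y _ _ h1 h2 =>
    obtain ⟨a, b, rfl⟩ := h1
    obtain ⟨a', b', rfl⟩ := h2
    refine ⟨a * a' + b * b' * d, a * b' + a' * b, ?_⟩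
    push_cast
    linear_combination (b * b' : ℂ) * hsq
  | inv x _ h =>
    obtain ⟨a, b, rfl⟩ := h
    have hdq : (d : ℚ) < 0 := by exact_mod_cast hd
    by_cases hN : a ^ 2 - b ^ 2 * d = 0
    · have ha : a = 0 := by
        by_contra h
        have := pow_pos (abs_pos.2 h) 2
        rw [sq_abs] at this
        nlinarith [sq_nonneg b]
      have hb : b = 0 := by
        by_contra h
        have := pow_pos (abs_pos.2 h) 2
        rw [sq_abs] at this
        nlinarith [sq_nonneg a]
      exact ⟨0, 0, by simp [ha, hb]⟩
    · refine ⟨a / (a ^ 2 - b ^ 2 * d), - b / (a ^ 2 - b ^ 2 * d), ?_⟩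
      have hN' : (a : ℂ) ^ 2 - b ^ 2 * d ≠ 0 := by exact_mod_cast hN
      apply inv_eq_of_mul_eq_one_right
      push_cast
      field_simp
      linear_combination (-(b : ℂ) ^ 2) * hsq

lemma int_of_rat (q : ℚ) (h : IsIntegral ℤ (q : ℂ)) : ∃ k : ℤ, (q : ℂ) = k := by
  have h2 : IsIntegral ℤ q := by
    have : (q : ℂ) = algebraMap ℚ ℂ q := by simp
    rw [this] at h
    exact (isIntegral_algebraMap_iff (algebraMap ℚ ℂ).injective).1 h
  obtain ⟨k, hk⟩ := IsIntegrallyClosed.isIntegral_iff.1 h2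
  refine ⟨k, ?_⟩
  rw [← hk]; simp

lemma trace_norm (d : ℤ) (hd : d < 0) (z : ℂ) (hz : z ∈ Qsqrt d) (hi : IsIntegral ℤ z) :
    ∃ b c : ℤ, z + (starRingEnd ℂ) z = b ∧ z * (starRingEnd ℂ) z = c ∧ 0 ≤ c := by
  have hc : IsIntegral ℤ ((starRingEnd ℂ) z) := hi.map (starRingEnd ℂ).toIntAlgHom
  obtain ⟨x, y, hxy⟩ := mem_form_s16 d hd z hz
  have hcz : (starRingEnd ℂ) z = x - y * rtd d := by
    rw [hxy]; simp [rtd_conj d hd]; ring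
  have h1 : z + (starRingEnd ℂ) z = ((2 * x : ℚ) : ℂ) := by
    rw [hcz, hxy]; push_cast; ring
  have h2 : z * (starRingEnd ℂ) z = ((x ^ 2 - y ^ 2 * d : ℚ) : ℂ) := by
    rw [hcz, hxy]; push_cast; linear_combination (-(y : ℂ) ^ 2) * rtd_sq d
  obtain ⟨b, hb⟩ := int_of_rat (2 * x) (h1 ▸ hi.add hc)
  obtain ⟨c, hcc⟩ := int_of_rat _ (h2 ▸ hi.mul hc)
  refine ⟨b, c, h1.trans hb, h2.trans hcc, ?_⟩
  have h3 : (x ^ 2 - y ^ 2 * d : ℚ) = c := by exact_mod_cast hcc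
  have hdq : (d : ℚ) < 0 := by exact_mod_cast hd
  have : (0 : ℚ) ≤ c := by rw [← h3]; nlinarith [sq_nonneg x, sq_nonneg y]
  exact_mod_cast this

lemma no_sqrt_neg_three (d : ℤ) (hd : d < 0) (h3 : ¬ (3 : ℤ) ∣ d) (z : ℂ) (hz : z ∈ Qsqrt d) :
    z ^ 2 ≠ -3 := by
  intro hz2
  obtain ⟨x, y, hxy⟩ := mem_form_s16 d hd z hz
  have hdq : (d : ℚ) < 0 := by exact_mod_cast hd
  have e1 : (x ^ 2 + y ^ 2 * d + 3 : ℂ) + 2 * x * y * rtd d = 0 := by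
    rw [hxy] at hz2
    linear_combination hz2 - (y : ℂ) ^ 2 * rtd_sq d
  have e2 : (x ^ 2 + y ^ 2 * d + 3 : ℂ) - 2 * x * y * rtd d = 0 := by
    have := congrArg (starRingEnd ℂ) e1
    simp only [map_add, map_mul, map_pow, map_ofNat, map_zero, map_intCast, map_ratCast, rtd_conj d hd] at this
    linear_combination this
  have e3 : (x ^ 2 + y ^ 2 * d + 3 : ℚ) = 0 := by
    have : (x ^ 2 + y ^ 2 * d + 3 : ℂ) = 0 := by linear_combination (e1 + e2) / 2
    exact_mod_cast this
  have hr : rtd d ≠ 0 := by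
    intro h
    have := rtd_sq d
    rw [h] at this
    have h0 : (d : ℂ) = 0 := by rw [← this]; simp
    have : d = 0 := by exact_mod_cast h0
    omega
  have e4 : x * y = 0 := by
    have : ((x * y : ℂ)) * rtd d = 0 := by linear_combination (e1 - e2) / 4
    rcases mul_eq_zero.1 this with h | h
    · exact_mod_cast h
    · exact absurd h hr
  rcases mul_eq_zero.1 e4 with h | h
  · rw [h] at e3
    have hy : (y.num : ℚ) ^ 2 * d = - 3 * y.den ^ 2 := by
      have hnum : y * y.den = y.num := Rat.mul_den_eq_num y
      rw [← hnum]
      linear_combination (y.den : ℚ) ^ 2 * e3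
    have hyz : y.num ^ 2 * d = - 3 * (y.den : ℤ) ^ 2 := by exact_mod_cast hy
    have p3 : Prime (3 : ℤ) := Int.prime_three
    have h5 : (3 : ℤ) ∣ y.num := by
      have : (3 : ℤ) ∣ y.num ^ 2 * d := ⟨-(y.den : ℤ) ^ 2, by rw [hyz]; ring⟩
      rcases p3.dvd_or_dvd this with h | h
      · exact p3.dvd_of_dvd_pow h
      · exact absurd h h3
    have h6 : (3 : ℤ) ∣ y.den := by
      obtain ⟨k, hk⟩ := h5
      rw [hk] at hyz
      have : (3 : ℤ) ∣ (y.den : ℤ) ^ 2 := ⟨-k ^ 2 * d, by linarith⟩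
      exact p3.dvd_of_dvd_pow this
    have h7 := y.reduced
    have h8 : 3 ∣ y.num.natAbs := by omega
    have h9 : 3 ∣ y.den := by omega
    have := Nat.dvd_gcd h8 h9
    rw [h7] at this
    omega
  · rw [h] at e3
    nlinarith [sq_nonneg x]

lemma unit_pow_four (d : ℤ) (hd : d < 0) (h3 : ¬ (3 : ℤ) ∣ d) (u v : ℂ) (hu : u ∈ Qsqrt d)
    (hv : v ∈ Qsqrt d) (hui : IsIntegral ℤ u) (hvi : IsIntegral ℤ v) (huv : u * v = 1) :
    u ^ 4 = 1 := by
  obtain ⟨b, c, hb, hc, hc0⟩ := trace_norm d hd u hu hui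
  obtain ⟨b', c', hb', hc', hc0'⟩ := trace_norm d hd v hv hvi
  have hcc : c * c' = 1 := by
    have : ((c * c' : ℤ) : ℂ) = (u * v) * (starRingEnd ℂ) (u * v) := by
      push_cast; rw [← hc, ← hc', map_mul]; ring
    rw [huv] at this
    simp at this
    exact_mod_cast this
  have hc1 : c = 1 := Int.eq_one_of_mul_eq_one_right hc0 hcc
  subst hc1
  have hq : u ^ 2 - b * u + 1 = 0 := by
    rw [← hb]; push_cast at hc; linear_combination (-1 : ℂ) * hc
  have hbr : b ^ 2 ≤ 4 := by
    have h1 := congrArg Complex.re hb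
    have h2 := congrArg Complex.re hc
    simp at h1 h2
    have : (b : ℝ) ^ 2 ≤ 4 := by
      rw [← h1]; nlinarith [mul_self_nonneg u.im]
    exact_mod_cast this
  have hb1 : b ≤ 2 := by nlinarith
  have hb2 : -2 ≤ b := by nlinarith
  have hmem : ∀ e : ℤ, 2 * u - e ∈ Qsqrt d := by
    intro e
    have he : (e : ℂ) ∈ Qsqrt d := intCast_mem _ e
    have h2 : (2 : ℂ) ∈ Qsqrt d := ofNat_mem _ 2
    exact sub_mem (mul_mem h2 hu) he
  interval_cases b
  · have : u = -1 := by
      have : (u + 1) ^ 2 = 0 := by push_cast at hq; linear_combination hq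
      linear_combination pow_eq_zero_iff (two_ne_zero) |>.1 this
    rw [this]; norm_num
  · exact absurd (by push_cast at hq ⊢; linear_combination 4 * hq)
      (no_sqrt_neg_three d hd h3 _ (hmem (-1)))
  · have : u ^ 2 = -1 := by push_cast at hq; linear_combination hq
    linear_combination (u ^ 2 - 1) * this
  · exact absurd (by push_cast at hq ⊢; linear_combination 4 * hq)
      (no_sqrt_neg_three d hd h3 _ (hmem 1))
  · have : u = 1 := by
      have : (u - 1) ^ 2 = 0 := by push_cast at hq; linear_combination hq
      linear_combination pow_eq_zero_iff (two_ne_zero) |>.1 this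
    rw [this]; norm_num

/-- Lucas sequence. -/
def luc (b V : ℤ) : ℕ → ℤ
  | 0 => 2
  | 1 => b
  | k + 2 => b * luc b V (k + 1) - V * luc b V k

lemma luc_eq (x y : ℂ) (b V : ℤ) (hb : x + y = b) (hV : x * y = V) (k : ℕ) :
    x ^ k + y ^ k = luc b V k ∧ x ^ (k + 1) + y ^ (k + 1) = luc b V (k + 1) := by
  induction k with
  | zero => simp [luc, hb]; norm_num
  | succ k ih =>
    refine ⟨ih.2, ?_⟩
    rw [luc]; push_cast
    rw [← ih.1, ← ih.2, ← hb, ← hV]; ring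

lemma luc_dvd (b V : ℤ) (k : ℕ) : b ∣ luc b V (2 * k + 1) := by
  induction k with
  | zero => simp [luc]
  | succ k ih =>
    rw [show 2 * (k + 1) + 1 = (2 * k + 1) + 2 by ring, luc]
    exact dvd_sub (dvd_mul_right _ _) (ih.mul_left _)

lemma luc_mod (b V : ℤ) (k : ℕ) :
    V ^ 2 ∣ luc b V (k + 2) - (b ^ (k + 2) - (k + 2) * V * b ^ k) ∧
    V ^ 2 ∣ luc b V (k + 3) - (b ^ (k + 3) - (k + 3) * V * b ^ (k + 1)) := by
  induction k with
  | zero =>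
    constructor
    · exact ⟨0, by simp [luc]; ring⟩
    · exact ⟨0, by simp [luc]; ring⟩
  | succ k ih =>
    refine ⟨?_, ?_⟩
    · convert ih.2 using 2
      push_cast; ring
    · obtain ⟨⟨r, hr⟩, ⟨q, hq⟩⟩ := ih
      refine ⟨b * q - V * r + (k + 2) * b ^ k, ?_⟩
      rw [show k + 1 + 3 = (k + 2) + 2 by ring, luc, show k + 2 + 1 = k + 3 by ring]
      push_cast
      linear_combination b * hq - V * hr

lemma luc_contra (b V s : ℤ) (p n : ℕ) (hp : 3 ≤ p) (hpo : Odd p) (hpn : p ≤ n) (hs : 0 < s)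
    (hVp : IsCoprime V p) (hVs : IsCoprime V (2 * s)) (hV : (2 * s) ^ n + 2 * s < V)
    (h : luc b V p = 2 * s) : False := by
  have hbs : b ∣ 2 * s := by
    obtain ⟨k, hk⟩ := hpo
    rw [← h, hk]; exact luc_dvd b V k
  have hVb : IsCoprime V b := hVs.of_isCoprime_of_dvd_right hbs
  obtain ⟨k, rfl⟩ : ∃ k, p = k + 2 := ⟨p - 2, by omega⟩
  obtain ⟨q, hq⟩ := (luc_mod b V k).1
  rw [h] at hq
  have habs : |b| ≤ 2 * s := by
    have := Int.le_of_dvd (by omega) ((abs_dvd _ _).2 hbs)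
    exact this
  have hbp : |b ^ (k + 2)| ≤ (2 * s) ^ n := by
    rw [abs_pow]
    calc |b| ^ (k + 2) ≤ (2 * s) ^ (k + 2) := pow_le_pow_left₀ (abs_nonneg _) habs _
      _ ≤ (2 * s) ^ n := pow_le_pow_right₀ (by omega) hpn
  have hpw : 0 < (2 * s) ^ n := by positivity
  have h0 : 2 * s - b ^ (k + 2) = 0 := by
    apply Int.eq_zero_of_abs_lt_dvd (m := V)
    · exact ⟨V * q - (k + 2) * b ^ k, by linear_combination hq⟩
    · rw [abs_le] at hbp
      rw [abs_lt]; constructor <;> linarith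
  have hV0 : V ≠ 0 := by omega
  have h1 : V ∣ (k + 2 : ℕ) * b ^ k := by
    refine ⟨q, ?_⟩
    apply mul_left_cancel₀ hV0
    push_cast
    linear_combination hq - h0
  have h2 : V ∣ b ^ k := hVp.dvd_of_dvd_mul_left h1
  have h3 : IsUnit V := by
    have : IsCoprime V (b ^ k) := hVb.pow_right
    exact this.isUnit_of_dvd' dvd_rfl h2
  rcases Int.isUnit_iff.1 h3 with h | h <;> omega

open NumberField in
lemma main_lemma (n : ℕ) (hn : Odd n) (d s U : ℤ) (hd : d < 0) (hs : 0 < s)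
    (hdU : 16 * d = s ^ 2 - U ^ n) (hUs : IsCoprime U (2 * s)) (hUn : IsCoprime U n)
    (h3 : ¬ (3 : ℤ) ∣ d) (hU : (2 * s) ^ n + 2 * s < U) :
    ∃ x : ClassGroup (𝓞 (Qsqrt d)), orderOf x = n := by
  have := Qsqrt_nf d
  have hnpos : 0 < n := hn.pos
  have hpw : 0 < (2 * s) ^ n := by positivity
  have hU0 : 1 < U := by omega
  let δ : 𝓞 (Qsqrt d) := ⟨⟨rtd d, rtd_mem d⟩, by
    have := rtd_int d
    rw [show rtd d = algebraMap (Qsqrt d) ℂ ⟨rtd d, rtd_mem d⟩ from rfl] at this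
    exact (isIntegral_algebraMap_iff (algebraMap (Qsqrt d) ℂ).injective).1 this⟩
  let φ : 𝓞 (Qsqrt d) →+* ℂ := (algebraMap (Qsqrt d) ℂ).comp (algebraMap (𝓞 (Qsqrt d)) (Qsqrt d))
  have hφδ : φ δ = rtd d := rfl
  have hφinj : Function.Injective φ :=
    (algebraMap (Qsqrt d) ℂ).injective.comp RingOfIntegers.coe_injective
  have hφmem : ∀ x, φ x ∈ Qsqrt d := fun x => (algebraMap (𝓞 (Qsqrt d)) (Qsqrt d) x).2
  have hφint : ∀ x, IsIntegral ℤ (φ x) := fun x =>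
    (RingOfIntegers.isIntegral x).map φ.toIntAlgHom
  have hδ2 : δ ^ 2 = d := by
    apply hφinj
    rw [map_pow, hφδ, rtd_sq]; simp
  set α : 𝓞 (Qsqrt d) := s + 4 * δ with hα
  set α' : 𝓞 (Qsqrt d) := s - 4 * δ with hα'
  have hdU' : (16 : 𝓞 (Qsqrt d)) * d = s ^ 2 - U ^ n := by exact_mod_cast congrArg (Int.cast (R := 𝓞 (Qsqrt d))) hdU
  have hαα : α * α' = (U : 𝓞 (Qsqrt d)) ^ n := by
    rw [hα, hα']; linear_combination (-16) * hδ2 - hdU'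
  have hcop : IsCoprime α α' := by
    have h1 : IsCoprime (U ^ n) (2 * s) := hUs.pow_left
    obtain ⟨a, b, hab⟩ := h1
    have hab' : (a : 𝓞 (Qsqrt d)) * U ^ n + b * (2 * s) = 1 := by exact_mod_cast congrArg (Int.cast (R := 𝓞 (Qsqrt d))) hab
    refine ⟨a * α' + b, b, ?_⟩
    rw [← hab', ← hαα, hα, hα']; ring
  have hα0 : α ≠ 0 := by
    intro h
    rw [h, zero_mul] at hαα
    have : (U : 𝓞 (Qsqrt d)) = 0 := (pow_eq_zero_iff hnpos.ne').1 hαα.symm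
    have : U = 0 := by exact_mod_cast this
    omega
  have hIcop : IsCoprime (Ideal.span {α}) (Ideal.span {α'}) :=
    (Ideal.isCoprime_span_singleton_iff _ _).2 hcop
  have hImul : Ideal.span {α} * Ideal.span {α'} = (Ideal.span {(U : 𝓞 (Qsqrt d))}) ^ n := by
    rw [Ideal.span_singleton_mul_span_singleton, Ideal.span_singleton_pow, hαα]
  obtain ⟨I, hI⟩ : ∃ I : Ideal (𝓞 (Qsqrt d)), Ideal.span {α} = I ^ n := by
    classical
    let : GCDMonoid (Ideal (𝓞 (Qsqrt d))) := UniqueFactorizationMonoid.toGCDMonoid _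
    exact exists_eq_pow_of_mul_eq_pow_of_coprime hIcop hImul
  have hI0 : I ≠ 0 := by
    intro h
    rw [h, zero_pow hnpos.ne'] at hI
    exact hα0 (Ideal.span_singleton_eq_bot.1 hI)
  have hImem : I ∈ nonZeroDivisors (Ideal (𝓞 (Qsqrt d))) := mem_nonZeroDivisors_of_ne_zero hI0
  have hone : ∀ k : ℕ, (ClassGroup.mk0 ⟨I, hImem⟩) ^ k = 1 ↔ (I ^ k).IsPrincipal := by
    intro k
    rw [← map_pow]
    exact ClassGroup.mk0_eq_one_iff (I := I ^ k) (pow_mem hImem k)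
  refine ⟨ClassGroup.mk0 ⟨I, hImem⟩, ?_⟩
  apply orderOf_eq_of_pow_and_pow_div_prime hnpos
  · rw [hone, ← hI]; exact ⟨α, rfl⟩
  intro p hp hpn hx
  rw [hone] at hx
  obtain ⟨β, hβ⟩ := hx
  have hβ : I ^ (n / p) = Ideal.span {β} := hβ
  have hpo : Odd p := hn.of_dvd_nat hpn
  have hp3 : 3 ≤ p := by
    have := hp.two_le
    rcases hpo with ⟨k, hk⟩
    omega
  have hassoc : Associated (β ^ p) α := by
    rw [← Ideal.span_singleton_eq_span_singleton, ← Ideal.span_singleton_pow, ← hβ, ← pow_mul,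
      Nat.div_mul_cancel hpn, hI]
  obtain ⟨u, hu⟩ := hassoc
  have hu4 : (u : 𝓞 (Qsqrt d)) ^ 4 = 1 := by
    apply hφinj
    rw [map_pow, map_one]
    apply unit_pow_four d hd h3 (φ u) (φ (u⁻¹ : (𝓞 (Qsqrt d))ˣ)) (hφmem _) (hφmem _) (hφint _)
      (hφint _)
    rw [← map_mul, Units.mul_inv, map_one]
  have hup : ((u : 𝓞 (Qsqrt d)) ^ p) ^ p = u := by
    rcases hpo with ⟨k, hk⟩
    rw [← pow_mul, hk, show (2 * k + 1) * (2 * k + 1) = 4 * (k ^ 2 + k) + 1 by ring, pow_succ,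
      pow_mul, hu4, one_pow, one_mul]
  set γ : 𝓞 (Qsqrt d) := (u : 𝓞 (Qsqrt d)) ^ p * β with hγ
  have hγα : γ ^ p = α := by rw [hγ, mul_pow, hup, mul_comm, hu]
  obtain ⟨b, V, hb, hV, hV0⟩ := trace_norm d hd (φ γ) (hφmem _) (hφint _)
  have hφα : φ α = s + 4 * rtd d := by rw [hα, map_add, map_mul, map_ofNat, map_intCast, hφδ]
  have hφα' : (starRingEnd ℂ) (φ α) = s - 4 * rtd d := by
    rw [hφα]
    simp only [map_add, map_mul, map_ofNat, map_intCast, rtd_conj d hd]; ring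
  have hluc : luc b V p = 2 * s := by
    have h := (luc_eq _ _ b V hb hV p).1
    rw [← map_pow, ← map_pow, ← map_pow, hγα, hφα', hφα] at h
    have : ((2 * s : ℤ) : ℂ) = luc b V p := by rw [← h]; push_cast; ring
    exact_mod_cast this.symm
  have hVU : V ^ p = U ^ n := by
    have : ((V ^ p : ℤ) : ℂ) = ((U ^ n : ℤ) : ℂ) := by
      rw [Int.cast_pow, ← hV, mul_pow, ← map_pow, ← map_pow, ← map_pow, hγα, hφα', hφα]
      have : U ^ n = s ^ 2 - 16 * d := by linarith
      rw [this]; push_cast; linear_combination (-16) * rtd_sq d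
    exact_mod_cast this
  have hVU' : V = U ^ (n / p) := by
    apply (pow_left_inj₀ hV0 (by positivity) hp.ne_zero).1
    rw [← pow_mul, Nat.div_mul_cancel hpn, hVU]
  have hnp : n / p ≠ 0 := (Nat.div_pos (Nat.le_of_dvd hnpos hpn) hp.pos).ne'
  have hUV : U ≤ V := by rw [hVU']; exact le_self_pow₀ hU0.le hnp
  have hUp : IsCoprime U p := hUn.of_isCoprime_of_dvd_right (by exact_mod_cast hpn)
  exact luc_contra b V s p n hp3 hpo (Nat.le_of_dvd hnpos hpn) hs (hVU' ▸ hUp.pow_left)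
    (hVU' ▸ hUs.pow_left) (by linarith) hluc

lemma not_three_dvd (n : ℕ) (hn : Odd n) (d s U : ℤ) (hdU : 16 * d = s ^ 2 - U ^ n)
    (hU3 : U ≡ -1 [ZMOD 3]) : ¬ (3 : ℤ) ∣ d := by
  intro h
  have h1 : U ^ n ≡ -1 [ZMOD 3] := by simpa [hn.neg_one_pow] using hU3.pow n
  have h2 : s ^ 2 % 3 = 0 ∨ s ^ 2 % 3 = 1 := by
    have : s % 3 = 0 ∨ s % 3 = 1 ∨ s % 3 = 2 := by omega
    rcases this with h | h | h <;> simp [pow_two, Int.mul_emod, h]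
  unfold Int.ModEq at h1
  omega

/-- For any odd positive integer `n` and any positive integer `m`, there are infinitely
many negative integers `d` such that the ideal class groups of the imaginary quadratic
fields `ℚ(√d)` and `ℚ(√(d + m))` both contain an element of order `n`. -/
theorem infinite_pairs_classGroup_orderOf
    (n m : ℕ) (hn : Odd n) (hnpos : 0 < n) (hm : 0 < m) :
    {d : ℤ | d < 0 ∧ d + m < 0 ∧
      (∃ x : ClassGroup (NumberField.RingOfIntegers (Qsqrt d)), orderOf x = n) ∧
      (∃ y : ClassGroup (NumberField.RingOfIntegers (Qsqrt (d + m))),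
        orderOf y = n)}.Infinite := by
  apply Set.infinite_of_forall_exists_lt
  intro A
  obtain ⟨l, hl⟩ := hn
  have hm' : (0 : ℤ) < m := by exact_mod_cast hm
  have hn' : (0 : ℤ) < n := by exact_mod_cast hnpos
  have hnl : (n : ℤ) = 2 * l + 1 := by exact_mod_cast hl
  set M : ℤ := 3 * n * ((4 * m - 1) * (4 * m + 1)) with hM
  have hMpos : 0 < M := by
    have : (0 : ℤ) < 4 * m - 1 := by omega
    positivity
  set S : ℤ := 4 * m + 1 with hS
  set B : ℤ := (2 * S) ^ n + 2 * S + S ^ 2 + 16 * m + 16 * |A| + 16 with hB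
  have hpw : 0 < (2 * S) ^ n := by positivity
  have hB0 : 0 < B := by positivity
  set U : ℤ := -1 + M ^ 4 * (2 + 8 * m) + 16 * M * B with hUdef
  have hUB : B < U := by
    have h1 : 1 * B ≤ M * B := by gcongr; omega
    have h2 : 0 < M ^ 4 * (2 + 8 * m) := by positivity
    have : U = -1 + M ^ 4 * (2 + 8 * m) + 16 * (M * B) := by rw [hUdef]; ring
    omega
  have hUM : ∀ k : ℤ, k ∣ M → U ≡ -1 [ZMOD k] := by
    rintro k ⟨e, he⟩
    apply (Int.modEq_iff_dvd.2 _).symm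
    refine ⟨e * (M ^ 3 * (2 + 8 * m) + 16 * B), ?_⟩
    rw [hUdef]
    linear_combination (M ^ 3 * (2 + 8 * m) + 16 * B) * he
  have hUcop : ∀ k : ℤ, k ∣ M → IsCoprime U k := by
    intro k hk
    obtain ⟨e, he⟩ := Int.modEq_iff_dvd.1 (hUM k hk)
    exact ⟨-1, -e, by linear_combination he⟩
  have hU3 := hUM 3 ⟨n * ((4 * m - 1) * (4 * m + 1)), by rw [hM]; ring⟩
  have hUn := hUcop n ⟨3 * ((4 * m - 1) * (4 * m + 1)), by rw [hM]; ring⟩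
  have hU1 := hUcop (4 * m - 1) ⟨3 * n * (4 * m + 1), by rw [hM]; ring⟩
  have hU2 := hUcop S ⟨3 * n * (4 * m - 1), by rw [hM, hS]; ring⟩
  have hModd : ∃ c, M = 2 * c + 1 := by
    refine ⟨l * 3 * (16 * m ^ 2 - 1) + 24 * m ^ 2 - 2, ?_⟩
    rw [hM, hnl]; ring
  have hU16 : ∃ e, U = 1 + 8 * m + 16 * e := by
    obtain ⟨c, hc⟩ := hModd
    have h4 : ∃ e, M ^ 4 = 1 + 8 * e := ⟨2 * c ^ 4 + 4 * c ^ 3 + 3 * c ^ 2 + c, by rw [hc]; ring⟩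
    obtain ⟨e, he⟩ := h4
    exact ⟨e * (1 + 4 * m) + M * B, by rw [hUdef, he]; ring⟩
  have hUev : IsCoprime U 2 := by
    obtain ⟨e, he⟩ := hU16
    exact ⟨1, -(4 * m + 8 * e), by rw [he]; ring⟩
  have hUpow : ∃ e, U ^ n = 1 + 8 * m + 16 * e := by
    obtain ⟨e, he⟩ := hU16
    have hsq : U ^ 2 ≡ 1 [ZMOD 16] := by
      apply (Int.modEq_iff_dvd.2 _).symm
      exact ⟨m + 4 * m ^ 2 + 16 * e ^ 2 + 2 * e + 16 * m * e, by rw [he]; ring⟩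
    have h1 : U ^ n ≡ U [ZMOD 16] := by
      rw [hl, pow_succ, pow_mul]
      simpa using (hsq.pow l).mul_right U
    obtain ⟨f, hf⟩ := Int.modEq_iff_dvd.1 h1
    exact ⟨e - f, by linear_combination he - hf⟩
  obtain ⟨e, he⟩ := hUpow
  have hUU : U ≤ U ^ n := le_self_pow₀ (by omega) hnpos.ne'
  have hd1 : 16 * ((m : ℤ) ^ 2 - m - e) = (4 * m - 1) ^ 2 - U ^ n := by rw [he]; ring
  have hd2 : 16 * (((m : ℤ) ^ 2 - m - e) + m) = S ^ 2 - U ^ n := by rw [he, hS]; ring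
  have hS2 : (0 : ℤ) ≤ S ^ 2 := by positivity
  have hlt2 : ((m : ℤ) ^ 2 - m - e) + m < 0 := by
    have := abs_nonneg A
    omega
  have hltA : ((m : ℤ) ^ 2 - m - e) < A := by
    have := neg_abs_le A
    have := abs_nonneg A
    omega
  have hodd : Odd n := ⟨l, hl⟩
  have hA := abs_nonneg A
  have hpw1 : (2 * (4 * (m : ℤ) - 1)) ^ n ≤ (2 * S) ^ n :=
    pow_le_pow_left₀ (by omega) (by omega) _
  refine ⟨(m : ℤ) ^ 2 - m - e, ⟨by omega, hlt2, ?_, ?_⟩, hltA⟩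
  · exact main_lemma n hodd _ (4 * m - 1) U (by omega) (by omega) hd1 (hUev.mul_right hU1) hUn
      (not_three_dvd n hodd _ _ U hd1 hU3) (by omega)
  · exact main_lemma n hodd _ S U hlt2 (by omega) hd2 (hUev.mul_right hU2) hUn
      (not_three_dvd n hodd _ _ U hd2 hU3) (by omega)
end
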